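/- Let k ∈ {0,1}, let F : ℝ × ℝ^{d+1} → ℝ be C¹ with F(0,0) = 0 and with bounded gradient ∇F, and let f, g ∈ ℓ^{2,k}(ℤ^d). Then the semilinear wave equation ∂_t² u − Δu = F(u,u') on ℤ^d with initial data u(·,0) = f, ∂_t u(·,0) = g has a global solution: for every T > 0 there exists u ∈ C²([0,T]; ℓ^{2,k}(ℤ^d)) solving the equation with these initial data. -/

import Mathlib

open scoped BigOperators ENNReal NNReal
open MeasureTheory Filter

noncomputable section

/-- Kernel `φⱼ` of the discrete partial derivative on `ℤ^d`:
`φⱼ(m) = -4i/(π(4a²-1))` if `m = a·eⱼ`, and `0` otherwise. -/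
def phi (d : ℕ) (j : Fin d) (m : Fin d → ℤ) : ℂ :=
  if ∀ i, i ≠ j → m i = 0 then
    (-4 * Complex.I) / ((Real.pi : ℂ) * (4 * (m j : ℂ) ^ 2 - 1))
  else 0

/-- Discrete convolution on `ℤ^d`. -/
def dconv {d : ℕ} (u v : (Fin d → ℤ) → ℂ) (k : Fin d → ℤ) : ℂ :=
  ∑' m, u m * v (k - m)

/-- Discrete partial derivative `∂ⱼ u = u ∗ φⱼ`. -/
def pd {d : ℕ} (j : Fin d) (u : (Fin d → ℤ) → ℂ) : (Fin d → ℤ) → ℂ :=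
  dconv u (phi d j)

/-- Japanese bracket `⟨m⟩ = (1+|m|²)^{1/2}`. -/
def jap {d : ℕ} (m : Fin d → ℤ) : ℝ :=
  Real.sqrt (1 + ∑ i, ((m i : ℝ)) ^ 2)

open scoped Classical in
/-- `ℓ^p` norm on `ℤ^d` (valued in `ℝ≥0∞`), `1 ≤ p ≤ ∞`. -/
def lpn {d : ℕ} (p : ℝ≥0∞) (f : (Fin d → ℤ) → ℂ) : ℝ≥0∞ :=
  if p = ⊤ then ⨆ m, (‖f m‖₊ : ℝ≥0∞)
  else (∑' m, (‖f m‖₊ : ℝ≥0∞) ^ p.toReal) ^ (1 / p.toReal)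

/-- Weighted `ℓ^{2,k}` norm: the `ℓ²` norm of `m ↦ ⟨m⟩^k f(m)`. -/
def w2 {d : ℕ} (k : ℕ) (f : (Fin d → ℤ) → ℂ) : ℝ≥0∞ :=
  lpn 2 (fun m => ((jap m ^ k : ℝ) : ℂ) * f m)

/-- Discrete Laplacian on `ℤ^d`. -/
def lap {d : ℕ} (u : (Fin d → ℤ) → ℂ) (x : Fin d → ℤ) : ℂ :=
  ∑ j, (u (x + Pi.single j 1) + u (x - Pi.single j 1) - 2 * u x)

/-- Continuity of a curve `t ↦ f(·,t)` into `ℓ^{2,k}(ℤ^d)` on a set `S` of times. -/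
def ContW {d : ℕ} (k : ℕ) (S : Set ℝ) (f : ℝ → (Fin d → ℤ) → ℂ) : Prop :=
  ∀ t ∈ S, Tendsto (fun s => w2 k (fun m => f s m - f t m))
    (nhdsWithin t S) (nhds (0 : ℝ≥0∞))

/-- `f'` is the derivative (in the `ℓ^{2,k}(ℤ^d)` norm) of the curve `t ↦ f(·,t)` on `S`. -/
def DerivW {d : ℕ} (k : ℕ) (S : Set ℝ) (f f' : ℝ → (Fin d → ℤ) → ℂ) : Prop :=
  ∀ t ∈ S, Tendsto
    (fun s => w2 k (fun m => (s - t)⁻¹ • (f s m - f t m) - f' t m))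
    (nhdsWithin t (S \ {t})) (nhds (0 : ℝ≥0∞))

/-- `u ∈ C²(S; ℓ^{2,k}(ℤ^d))`, with first and second time derivatives `u1`, `u2`. -/
structure IsC2 {d : ℕ} (k : ℕ) (S : Set ℝ) (u u1 u2 : ℝ → (Fin d → ℤ) → ℂ) : Prop where
  mem0 : ∀ t ∈ S, w2 k (u t) < ⊤
  mem1 : ∀ t ∈ S, w2 k (u1 t) < ⊤
  mem2 : ∀ t ∈ S, w2 k (u2 t) < ⊤
  cont0 : ContW k S u
  cont1 : ContW k S u1
  cont2 : ContW k S u2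
  hder1 : DerivW k S u u1
  hder2 : DerivW k S u1 u2

/-- The pointwise state `(u, u') = (u, ∂ₜu, ∂₁u, …, ∂_d u)` of a solution. -/
def state {d : ℕ} (u u1 : ℝ → (Fin d → ℤ) → ℂ) (t : ℝ) (x : Fin d → ℤ) :
    ℂ × (Fin (d + 1) → ℂ) :=
  (u t x, Fin.cons (u1 t x) fun i => pd i (u t) x)

/-- `u` (with time derivatives `u1`, `u2`) is a classical solution in
`C²(S; ℓ^{2,k}(ℤ^d))` of the semilinear wave equation `∂ₜ²u - Δu = F(u,u')`
with data `u(·,0)=f`, `∂ₜu(·,0)=g`. -/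
def SLSol (d k : ℕ) (F : ℂ × (Fin (d + 1) → ℂ) → ℂ) (f g : (Fin d → ℤ) → ℂ)
    (S : Set ℝ) (u u1 u2 : ℝ → (Fin d → ℤ) → ℂ) : Prop :=
  IsC2 k S u u1 u2 ∧
    (∀ t ∈ S, ∀ x, u2 t x - lap (u t) x = F (state u u1 t x)) ∧
    (∀ x, u 0 x = f x) ∧ (∀ x, u1 0 x = g x)

/-!
As a first-order system the equation reads `(u, v)' = (v, Δu + F(u, v, ∂u))` on
`ℓ^{2,k} × ℓ^{2,k}`. If `Δ` and the `∂ⱼ` are bounded on `ℓ^{2,k}`, the right-hand side is globally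
Lipschitz, and Picard iteration converges on the whole time axis at once when curves are measured
in a norm with weight `1 / cosh (r t)`, `r` large.

Both operators are convolutions with kernels `c` on a coordinate axis such that
`|c a| ≤ A q(a)²`, where `q(a) = 1 / (1 + |a|)`. For `k = 1` Young's inequality does not apply to
`∂ⱼ`, since `⟨a⟩ φⱼ(a)` is not summable. Instead `⟨y + a eⱼ⟩ ≤ ⟨y⟩ (1 + 2 |a| q(yⱼ))` bounds the
conjugated kernel by `A q(a) (q(a) + 2 q(yⱼ))`, and the Cauchy–Schwarz inequality in `a` suffices
because `q` is square summable.
-/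

section JapaneseBracket

variable {d : ℕ}

lemma jap_sq (m : Fin d → ℤ) : jap m ^ 2 = 1 + ∑ i, (m i : ℝ) ^ 2 :=
  Real.sq_sqrt (by positivity)

lemma one_le_jap (m : Fin d → ℤ) : 1 ≤ jap m :=
  Real.one_le_sqrt.2 (le_add_of_nonneg_right (by positivity))

lemma jap_pos (m : Fin d → ℤ) : 0 < jap m := one_pos.trans_le (one_le_jap m)

lemma abs_le_jap (m : Fin d → ℤ) (j : Fin d) : |(m j : ℝ)| ≤ jap m := by
  have hj : (m j : ℝ) ^ 2 ≤ ∑ i, (m i : ℝ) ^ 2 :=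
    Finset.single_le_sum (f := fun i => (m i : ℝ) ^ 2) (fun i _ => sq_nonneg _) (Finset.mem_univ j)
  exact Real.abs_le_sqrt (hj.trans (le_add_of_nonneg_left zero_le_one))

lemma jap_add_single_sq (m : Fin d → ℤ) (j : Fin d) (a : ℤ) :
    jap (m + Pi.single j a) ^ 2 = jap m ^ 2 + 2 * (a * m j) + a ^ 2 := by
  have hterm (i : Fin d) : (((m + Pi.single j a : Fin d → ℤ) i : ℤ) : ℝ) ^ 2
      = (m i : ℝ) ^ 2 + if i = j then (2 * (a * m j) + a ^ 2 : ℝ) else 0 := by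
    rcases eq_or_ne i j with rfl | hij
    · simp only [Pi.add_apply, Pi.single_eq_same, Int.cast_add, if_true]
      ring
    · simp [hij]
  simp only [jap_sq, hterm, Finset.sum_add_distrib, Finset.sum_ite_eq', Finset.mem_univ, if_true]
  ring

lemma jap_add_single_le (m : Fin d → ℤ) (j : Fin d) (a : ℤ) :
    jap (m + Pi.single j a) ≤ jap m + |(a : ℝ)| := by
  have hcross : (a : ℝ) * m j ≤ |(a : ℝ)| * jap m :=
    (le_abs_self _).trans (by rw [abs_mul]; gcongr; exact abs_le_jap m j)
  refine le_of_sq_le_sq ?_ (add_nonneg (jap_pos m).le (abs_nonneg _))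
  rw [jap_add_single_sq, add_sq, sq_abs]
  linarith

end JapaneseBracket

section WeightedL2

variable {d k : ℕ}

/-- The measure on `ℤ^d` with mass `⟨m⟩^{2k}` at `m`, so that
`ℓ^{2,k}(ℤ^d) = L²(japMeasure d k)`. -/
def japMeasure (d k : ℕ) : Measure (Fin d → ℤ) :=
  Measure.count.withDensity fun m => ‖jap m ^ k‖ₑ ^ 2

lemma lintegral_japMeasure (h : (Fin d → ℤ) → ℝ≥0∞) :
    ∫⁻ m, h m ∂japMeasure d k = ∑' m, ‖jap m ^ k‖ₑ ^ 2 * h m := by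
  rw [japMeasure, lintegral_withDensity_eq_lintegral_mul _ .of_discrete .of_discrete,
    lintegral_count]
  rfl

lemma enorm_jap_pow_ne_zero (k : ℕ) (m : Fin d → ℤ) : ‖jap m ^ k‖ₑ ≠ 0 :=
  enorm_ne_zero.2 (pow_pos (jap_pos m) k).ne'

lemma ae_japMeasure : ae (japMeasure d k) = ⊤ :=
  ae_eq_top.2 fun m => by
    rw [← lintegral_indicator_one (measurableSet_singleton m), lintegral_japMeasure]
    refine fun h0 => enorm_jap_pow_ne_zero k m ?_
    simpa using ENNReal.tsum_eq_zero.1 h0 m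

lemma eq_of_ae_eq_japMeasure {E : Type*} {u v : (Fin d → ℤ) → E} (h : u =ᵐ[japMeasure d k] v) :
    u = v := by
  rwa [EventuallyEq, ae_japMeasure, eventually_top, ← funext_iff] at h

lemma eLpNorm_japMeasure_sq {E : Type*} [ENorm E] (u : (Fin d → ℤ) → E) :
    eLpNorm u 2 (japMeasure d k) ^ 2 = ∑' m, (‖jap m ^ k‖ₑ * ‖u m‖ₑ) ^ 2 := by
  rw [eLpNorm_eq_lintegral_rpow_enorm_toReal two_ne_zero ENNReal.ofNat_ne_top,
    lintegral_japMeasure, ← ENNReal.rpow_natCast, ← ENNReal.rpow_mul]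
  simp [mul_pow]

lemma w2_sq (u : (Fin d → ℤ) → ℂ) : w2 k u ^ 2 = ∑' m, (‖jap m ^ k‖ₑ * ‖u m‖ₑ) ^ 2 := by
  have hweight (m : Fin d → ℤ) :
      (‖((jap m ^ k : ℝ) : ℂ) * u m‖₊ : ℝ≥0∞) = ‖jap m ^ k‖ₑ * ‖u m‖ₑ := by
    rw [nnnorm_mul, Complex.nnnorm_real, ENNReal.coe_mul]
    rfl
  simp only [w2, lpn, if_neg ENNReal.ofNat_ne_top, hweight]
  rw [← ENNReal.rpow_natCast, ← ENNReal.rpow_mul]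
  simp

lemma w2_eq_eLpNorm (u : (Fin d → ℤ) → ℂ) : w2 k u = eLpNorm u 2 (japMeasure d k) :=
  (ENNReal.pow_right_strictMono two_ne_zero).injective
    ((w2_sq u).trans (eLpNorm_japMeasure_sq u).symm)

lemma memLp_japMeasure {E : Type*} [NormedAddCommGroup E] {u : (Fin d → ℤ) → E}
    (hu : eLpNorm u 2 (japMeasure d k) < ⊤) : MemLp u 2 (japMeasure d k) :=
  ⟨StronglyMeasurable.of_discrete.aestronglyMeasurable, hu⟩

lemma w2_coeFn (v : Lp ℂ 2 (japMeasure d k)) : w2 k v = ‖v‖ₑ := by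
  rw [w2_eq_eLpNorm, Lp.enorm_def]

lemma exists_coeFn_eq_of_w2_lt_top {f : (Fin d → ℤ) → ℂ} (hf : w2 k f < ⊤) :
    ∃ v : Lp ℂ 2 (japMeasure d k), ⇑v = f :=
  ⟨_, eq_of_ae_eq_japMeasure (memLp_japMeasure (w2_eq_eLpNorm f ▸ hf)).coeFn_toLp⟩

end WeightedL2

section SummationInequalities

variable {ι κ : Type*}

lemma tsum_mul_sq_le_tsum_sq_mul_tsum_sq (f g : ι → ℝ≥0∞) :
    (∑' i, f i * g i) ^ 2 ≤ (∑' i, f i ^ 2) * ∑' i, g i ^ 2 := by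
  let _ : MeasurableSpace ι := ⊤
  have holder := ENNReal.lintegral_mul_le_Lp_mul_Lq (Measure.count : Measure ι) (p := 2) (q := 2)
    Real.HolderConjugate.two_two (f := f) (g := g) Measurable.of_discrete.aemeasurable
    Measurable.of_discrete.aemeasurable
  simp only [lintegral_count, Pi.mul_apply, ENNReal.rpow_ofNat] at holder
  refine (pow_le_pow_left' holder 2).trans_eq ?_
  rw [← ENNReal.mul_rpow_of_nonneg _ _ (by norm_num), ← ENNReal.rpow_natCast, ← ENNReal.rpow_mul]
  norm_num

lemma tsum_sq_tsum_mul_le (τ : κ → ι ≃ ι) (q : κ → ℝ≥0∞) (U : ι → ℝ≥0∞) {r : κ → ι → ℝ≥0∞}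
    {B : ℝ≥0∞} (hr : ∀ x, ∑' a, r a x ^ 2 ≤ B) :
    ∑' x, (∑' a, q a * U (τ a x) * r a x) ^ 2 ≤ B * (∑' a, q a ^ 2) * ∑' x, U x ^ 2 := by
  calc ∑' x, (∑' a, q a * U (τ a x) * r a x) ^ 2
      ≤ ∑' x, (∑' a, (q a * U (τ a x)) ^ 2) * B := by
        refine ENNReal.tsum_le_tsum fun x => (tsum_mul_sq_le_tsum_sq_mul_tsum_sq _ _).trans ?_
        gcongr
        exact hr x
    _ = (∑' a, q a ^ 2 * ∑' x, U (τ a x) ^ 2) * B := by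
        simp only [mul_pow, ENNReal.tsum_mul_right, ← ENNReal.tsum_mul_left]
        rw [ENNReal.tsum_comm]
    _ = B * (∑' a, q a ^ 2) * ∑' x, U x ^ 2 := by
        simp only [fun a => (τ a).tsum_eq fun x => U x ^ 2, ENNReal.tsum_mul_right]
        ring

end SummationInequalities

section AxisConvolution

variable {d k : ℕ} {c : ℤ → ℂ} {A : ℝ≥0}

/-- The square summable weight `1 / (1 + |a|)` on `ℤ`, in which the decay of convolution kernels is
measured. -/
def invOneAddAbs (a : ℤ) : ℝ≥0 := (1 + ‖a‖₊)⁻¹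

lemma nnnorm_mul_invOneAddAbs_le_one (a : ℤ) : ‖a‖₊ * invOneAddAbs a ≤ 1 := by
  rw [invOneAddAbs, ← div_eq_mul_inv]
  exact div_le_one_of_le₀ le_add_self zero_le

lemma summable_invOneAddAbs_sq : Summable fun a => invOneAddAbs a ^ 2 := by
  have hnat : Summable fun n : ℕ => ((1 + (n : ℝ))⁻¹) ^ 2 := by
    refine ((Real.summable_one_div_nat_add_rpow 1 2).2 one_lt_two).congr fun n => ?_
    rw [Real.rpow_ofNat, sq_abs, add_comm, one_div, inv_pow]
  rw [← NNReal.summable_coe]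
  exact .of_nat_of_neg (by simpa [invOneAddAbs] using hnat) (by simpa [invOneAddAbs] using hnat)

lemma tsum_invOneAddAbs_sq_ne_top : ∑' a, (invOneAddAbs a : ℝ≥0∞) ^ 2 ≠ ⊤ := by
  exact_mod_cast ENNReal.tsum_coe_ne_top_iff_summable.2 summable_invOneAddAbs_sq

lemma tsum_invOneAddAbs_add_sq_le (b : ℤ) :
    ∑' a, ((invOneAddAbs a : ℝ≥0∞) + 2 * invOneAddAbs (b - a)) ^ 2
      ≤ 10 * ∑' a, (invOneAddAbs a : ℝ≥0∞) ^ 2 := by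
  have hterm (a : ℤ) : ((invOneAddAbs a : ℝ≥0∞) + 2 * invOneAddAbs (b - a)) ^ 2
      ≤ 2 * (invOneAddAbs a : ℝ≥0∞) ^ 2 + 8 * (invOneAddAbs (b - a) : ℝ≥0∞) ^ 2 := by
    have h := add_sq_le (a := invOneAddAbs a) (b := 2 * invOneAddAbs (b - a))
    rw [mul_pow, mul_add, ← mul_assoc] at h
    norm_num at h
    exact_mod_cast h
  refine (ENNReal.tsum_le_tsum hterm).trans_eq ?_
  have hreflect := (Equiv.subLeft b).tsum_eq fun a => (invOneAddAbs a : ℝ≥0∞) ^ 2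
  simp only [Equiv.subLeft_apply] at hreflect
  rw [ENNReal.tsum_add, ENNReal.tsum_mul_left, ENNReal.tsum_mul_left, hreflect]
  ring

lemma nnnorm_jap_add_single_pow_le (hk : k ≤ 1) (y : Fin d → ℤ) (j : Fin d) (a : ℤ) :
    ‖jap (y + Pi.single j a) ^ k‖₊
      ≤ ‖jap y ^ k‖₊ * (1 + 2 * (‖a‖₊ * invOneAddAbs (y j))) := by
  interval_cases k
  · simp
  · have hy : (1 : ℝ) ≤ 2 * jap y * (1 + |(y j : ℝ)|)⁻¹ := by
      rw [← div_eq_mul_inv, one_le_div (by positivity)]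
      linarith [one_le_jap y, abs_le_jap y j]
    rw [← NNReal.coe_le_coe]
    simp only [pow_one, invOneAddAbs]
    push_cast
    rw [Real.norm_of_nonneg (jap_pos _).le, Real.norm_of_nonneg (jap_pos _).le, Int.norm_eq_abs,
      Int.norm_eq_abs]
    calc jap (y + Pi.single j a) ≤ jap y + |(a : ℝ)| * 1 := by
          simpa using jap_add_single_le y j a
      _ ≤ jap y + |(a : ℝ)| * (2 * jap y * (1 + |(y j : ℝ)|)⁻¹) := by gcongr
      _ = jap y * (1 + 2 * (|(a : ℝ)| * (1 + |(y j : ℝ)|)⁻¹)) := by ring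

lemma nnnorm_jap_pow_mul_nnnorm_le (hk : k ≤ 1) (hc : ∀ a, ‖c a‖₊ ≤ A * invOneAddAbs a ^ 2)
    (j : Fin d) (a : ℤ) (x : Fin d → ℤ) :
    ‖jap x ^ k‖₊ * ‖c a‖₊ ≤ A * (invOneAddAbs a * ‖jap (x - Pi.single j a) ^ k‖₊
      * (invOneAddAbs a + 2 * invOneAddAbs (x j - a))) := by
  have hx := nnnorm_jap_add_single_pow_le hk (x - Pi.single j a) j a
  simp only [sub_add_cancel, Pi.sub_apply, Pi.single_eq_same] at hx
  set J := ‖jap (x - Pi.single j a) ^ k‖₊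
  calc ‖jap x ^ k‖₊ * ‖c a‖₊
      ≤ J * (1 + 2 * (‖a‖₊ * invOneAddAbs (x j - a))) * (A * invOneAddAbs a ^ 2) :=
        mul_le_mul' hx (hc a)
    _ = A * (invOneAddAbs a * J * (invOneAddAbs a
          + 2 * (‖a‖₊ * invOneAddAbs a * invOneAddAbs (x j - a)))) := by ring
    _ ≤ A * (invOneAddAbs a * J * (invOneAddAbs a + 2 * (1 * invOneAddAbs (x j - a)))) := by
        gcongr
        exact nnnorm_mul_invOneAddAbs_le_one a
    _ = A * (invOneAddAbs a * J * (invOneAddAbs a + 2 * invOneAddAbs (x j - a))) := by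
        rw [one_mul]

/-- Convolution on `ℤ^d` with a kernel `c` carried by the `j`-th coordinate axis; both `∂ⱼ` and the
second difference in direction `j` are of this form. -/
def axisConv (c : ℤ → ℂ) (j : Fin d) (u : (Fin d → ℤ) → ℂ) (x : Fin d → ℤ) : ℂ :=
  ∑' a, c a * u (x - Pi.single j a)

/-- The convolution `|c| ∗ |u|` dominating `axisConv c j u`, with values in `ℝ≥0∞` so that it makes
sense without summability. -/
def axisConvAbs (c : ℤ → ℂ) (j : Fin d) (u : (Fin d → ℤ) → ℂ) (x : Fin d → ℤ) : ℝ≥0∞ :=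
  ∑' a, ‖c a‖ₑ * ‖u (x - Pi.single j a)‖ₑ

lemma enorm_axisConv_le (c : ℤ → ℂ) (j : Fin d) (u : (Fin d → ℤ) → ℂ) (x : Fin d → ℤ) :
    ‖axisConv c j u x‖ₑ ≤ axisConvAbs c j u x :=
  enorm_tsum_le_tsum_enorm.trans_eq (by simp only [axisConvAbs, enorm_mul])

lemma enorm_jap_pow_mul_axisConvAbs_le (hk : k ≤ 1) (hc : ∀ a, ‖c a‖₊ ≤ A * invOneAddAbs a ^ 2)
    (j : Fin d) (u : (Fin d → ℤ) → ℂ) (x : Fin d → ℤ) :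
    ‖jap x ^ k‖ₑ * axisConvAbs c j u x
      ≤ A * ∑' a, invOneAddAbs a * (‖jap (x - Pi.single j a) ^ k‖ₑ * ‖u (x - Pi.single j a)‖ₑ)
          * (invOneAddAbs a + 2 * invOneAddAbs (x j - a)) := by
  rw [axisConvAbs, ← ENNReal.tsum_mul_left, ← ENNReal.tsum_mul_left]
  refine ENNReal.tsum_le_tsum fun a => ?_
  have hkernel := ENNReal.coe_le_coe.2 (nnnorm_jap_pow_mul_nnnorm_le hk hc j a x)
  push_cast at hkernel
  rw [← mul_assoc]
  refine (mul_le_mul_left hkernel ‖u (x - Pi.single j a)‖ₑ).trans_eq ?_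
  simp only [enorm_eq_nnnorm]
  ring

lemma exists_eLpNorm_axisConvAbs_le (hk : k ≤ 1) (hc : ∀ a, ‖c a‖₊ ≤ A * invOneAddAbs a ^ 2)
    (j : Fin d) : ∃ K : ℝ≥0, ∀ u : (Fin d → ℤ) → ℂ,
      eLpNorm (axisConvAbs c j u) 2 (japMeasure d k) ≤ K * eLpNorm u 2 (japMeasure d k) := by
  lift ∑' a, (invOneAddAbs a : ℝ≥0∞) ^ 2 to ℝ≥0 using tsum_invOneAddAbs_sq_ne_top with S hS
  refine ⟨4 * A * S, fun u => ?_⟩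
  let U (y : Fin d → ℤ) : ℝ≥0∞ := ‖jap y ^ k‖ₑ * ‖u y‖ₑ
  rw [← ENNReal.pow_le_pow_left_iff two_ne_zero, mul_pow, eLpNorm_japMeasure_sq,
    eLpNorm_japMeasure_sq]
  calc ∑' x, (‖jap x ^ k‖ₑ * ‖axisConvAbs c j u x‖ₑ) ^ 2
      ≤ ∑' x, A ^ 2 * (∑' a, invOneAddAbs a * U (Equiv.subRight (Pi.single j a) x)
          * (invOneAddAbs a + 2 * invOneAddAbs (x j - a))) ^ 2 := by
        refine ENNReal.tsum_le_tsum fun x => ?_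
        rw [← mul_pow, enorm_eq_self]
        exact pow_le_pow_left' (enorm_jap_pow_mul_axisConvAbs_le hk hc j u x) 2
    _ ≤ A ^ 2 * (10 * S * S * ∑' y, U y ^ 2) := by
        rw [ENNReal.tsum_mul_left, hS]
        gcongr
        exact tsum_sq_tsum_mul_le _ _ U fun x => tsum_invOneAddAbs_add_sq_le (x j)
    _ = 10 * (A * S) ^ 2 * ∑' y, U y ^ 2 := by ring
    _ ≤ 16 * (A * S) ^ 2 * ∑' y, U y ^ 2 := by
        gcongr
        norm_num
    _ = ((4 * A * S : ℝ≥0) : ℝ≥0∞) ^ 2 * ∑' y, U y ^ 2 := by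
        push_cast
        ring

lemma summable_axisConv (hk : k ≤ 1) (hc : ∀ a, ‖c a‖₊ ≤ A * invOneAddAbs a ^ 2) (j : Fin d)
    {u : (Fin d → ℤ) → ℂ} (hu : MemLp u 2 (japMeasure d k)) (x : Fin d → ℤ) :
    Summable fun a => c a * u (x - Pi.single j a) := by
  obtain ⟨K, hK⟩ := exists_eLpNorm_axisConvAbs_le hk hc j
  have hfin : eLpNorm (axisConvAbs c j u) 2 (japMeasure d k) ^ 2 ≠ ⊤ :=
    ENNReal.pow_ne_top (ne_top_of_le_ne_top (ENNReal.mul_ne_top ENNReal.coe_ne_top hu.2.ne) (hK u))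
  rw [eLpNorm_japMeasure_sq] at hfin
  have hx : axisConvAbs c j u x ≠ ⊤ := fun htop =>
    ENNReal.ne_top_of_tsum_ne_top hfin x <| by
      rw [htop, enorm_eq_self, ENNReal.mul_top (enorm_jap_pow_ne_zero k x),
        ENNReal.top_pow two_ne_zero]
  refine .of_nnnorm (ENNReal.tsum_coe_ne_top_iff_summable.1 ?_)
  simpa only [axisConvAbs, enorm_eq_nnnorm, nnnorm_mul, ENNReal.coe_mul] using hx

lemma exists_continuousLinearMap_axisConv (hk : k ≤ 1)
    (hc : ∀ a, ‖c a‖₊ ≤ A * invOneAddAbs a ^ 2) (j : Fin d) :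
    ∃ L : Lp ℂ 2 (japMeasure d k) →L[ℂ] Lp ℂ 2 (japMeasure d k), ∀ u, ⇑(L u) = axisConv c j u := by
  obtain ⟨K, hK⟩ := exists_eLpNorm_axisConvAbs_le hk hc j
  have hle (u : (Fin d → ℤ) → ℂ) :
      eLpNorm (axisConv c j u) 2 (japMeasure d k) ≤ K * eLpNorm u 2 (japMeasure d k) :=
    (eLpNorm_mono_enorm (enorm_axisConv_le c j u)).trans (hK u)
  have hmem (u : Lp ℂ 2 (japMeasure d k)) : MemLp (axisConv c j u) 2 (japMeasure d k) :=
    memLp_japMeasure <|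
      (hle u).trans_lt (ENNReal.mul_lt_top ENNReal.coe_lt_top (Lp.eLpNorm_lt_top u))
  have hadd (u v : Lp ℂ 2 (japMeasure d k)) :
      axisConv c j (u + v : Lp ℂ 2 (japMeasure d k)) = axisConv c j u + axisConv c j v := by
    funext x
    rw [eq_of_ae_eq_japMeasure (Lp.coeFn_add u v)]
    simp only [axisConv, Pi.add_apply, mul_add]
    exact (summable_axisConv hk hc j (Lp.memLp u) x).tsum_add
      (summable_axisConv hk hc j (Lp.memLp v) x)
  have hsmul (b : ℂ) (u : Lp ℂ 2 (japMeasure d k)) :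
      axisConv c j (b • u : Lp ℂ 2 (japMeasure d k)) = b • axisConv c j u := by
    funext x
    rw [eq_of_ae_eq_japMeasure (Lp.coeFn_smul b u)]
    simp only [axisConv, Pi.smul_apply, smul_eq_mul, mul_left_comm, tsum_mul_left]
  let L : Lp ℂ 2 (japMeasure d k) →ₗ[ℂ] Lp ℂ 2 (japMeasure d k) :=
    { toFun := fun u => (hmem u).toLp _
      map_add' := fun u v => by simpa only [hadd] using MemLp.toLp_add (hmem u) (hmem v)
      map_smul' := fun b u => by
        simpa only [hsmul, RingHom.id_apply] using MemLp.toLp_const_smul b (hmem u) }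
  refine ⟨L.mkContinuous K fun u => ?_, fun u => eq_of_ae_eq_japMeasure (hmem u).coeFn_toLp⟩
  have hreal := ENNReal.toReal_mono
    (ENNReal.mul_ne_top ENNReal.coe_ne_top (Lp.eLpNorm_ne_top u)) (hle u)
  rwa [ENNReal.toReal_mul, ENNReal.coe_toReal, ← Lp.norm_toLp _ (hmem u), ← Lp.norm_def] at hreal

end AxisConvolution

section DiscreteDerivatives

variable {d k : ℕ}

lemma norm_phi_single (j : Fin d) (a : ℤ) :
    ‖phi d j (Pi.single j a)‖ = 4 / (Real.pi * |4 * (a : ℝ) ^ 2 - 1|) := by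
  have hreal : (Real.pi : ℂ) * (4 * (a : ℂ) ^ 2 - 1)
      = ((Real.pi * (4 * (a : ℝ) ^ 2 - 1) : ℝ) : ℂ) := by
    push_cast
    rfl
  have haxis : ∀ i, i ≠ j → (Pi.single j a : Fin d → ℤ) i = 0 := fun i hi => by simp [hi]
  rw [phi, if_pos haxis, Pi.single_eq_same, hreal, norm_div, Complex.norm_real,
    norm_mul, norm_neg, Complex.norm_I, mul_one, Complex.norm_ofNat, Real.norm_eq_abs, abs_mul,
    abs_of_pos Real.pi_pos]

lemma nnnorm_phi_single_le (j : Fin d) (a : ℤ) :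
    ‖phi d j (Pi.single j a)‖₊ ≤ 2 * invOneAddAbs a ^ 2 := by
  have hden : 2 * (1 + |(a : ℝ)|) ^ 2 ≤ 3 * |4 * (a : ℝ) ^ 2 - 1| := by
    rcases eq_or_ne a 0 with rfl | ha
    · norm_num
    · have h1 : (1 : ℝ) ≤ |(a : ℝ)| := by exact_mod_cast Int.one_le_abs ha
      rw [← sq_abs (a : ℝ), abs_of_nonneg (a := 4 * |(a : ℝ)| ^ 2 - 1) (by nlinarith)]
      nlinarith
  have hpi : 3 * |4 * (a : ℝ) ^ 2 - 1| ≤ Real.pi * |4 * (a : ℝ) ^ 2 - 1| := by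
    gcongr
    exact Real.pi_gt_three.le
  rw [← NNReal.coe_le_coe, invOneAddAbs]
  push_cast
  rw [norm_phi_single, Int.norm_eq_abs, inv_pow, ← div_eq_mul_inv]
  calc 4 / (Real.pi * |4 * (a : ℝ) ^ 2 - 1|) ≤ 4 / (2 * (1 + |(a : ℝ)|) ^ 2) := by
        gcongr 4 / ?_
        exact hden.trans hpi
    _ = 2 / (1 + |(a : ℝ)|) ^ 2 := by
        field_simp
        norm_num

lemma eq_single_of_phi_ne_zero {j : Fin d} {m : Fin d → ℤ} (hm : phi d j m ≠ 0) :
    m = Pi.single j (m j) := by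
  have hoff : ∀ i, i ≠ j → m i = 0 := by
    by_contra h
    exact hm (if_neg h)
  funext i
  rcases eq_or_ne i j with rfl | hij
  · rw [Pi.single_eq_same]
  · rw [Pi.single_eq_of_ne hij, hoff i hij]

lemma pd_eq_axisConv (j : Fin d) (u : (Fin d → ℤ) → ℂ) :
    pd j u = axisConv (fun a => phi d j (Pi.single j a)) j u := by
  funext x
  have hinj : Function.Injective fun a : ℤ => x - Pi.single j a :=
    (sub_right_injective (b := x)).comp (Pi.single_injective j)
  have hsupp : Function.support (fun m => u m * phi d j (x - m))
      ⊆ Set.range fun a : ℤ => x - Pi.single j a := fun m hm =>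
    ⟨(x - m) j, by
      simp only [← eq_single_of_phi_ne_zero (right_ne_zero_of_mul hm), sub_sub_cancel]⟩
  rw [pd, dconv, axisConv, ← hinj.tsum_eq hsupp]
  simp only [sub_sub_cancel, mul_comm]

/-- The kernel `δ₁ + δ₋₁ - 2 δ₀` of the second difference on `ℤ`, through which `lap` is a sum of
axis convolutions. -/
def secondDiff (a : ℤ) : ℂ := if a = 0 then -2 else if a = 1 ∨ a = -1 then 1 else 0

lemma nnnorm_secondDiff_le (a : ℤ) : ‖secondDiff a‖₊ ≤ 4 * invOneAddAbs a ^ 2 := by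
  rw [secondDiff]
  split_ifs with h0 h1
  · norm_num [h0, invOneAddAbs, ← NNReal.coe_le_coe]
  · rcases h1 with rfl | rfl <;> norm_num [invOneAddAbs, ← NNReal.coe_le_coe]
  · simp

lemma lap_eq_sum_axisConv (u : (Fin d → ℤ) → ℂ) : lap u = ∑ j, axisConv secondDiff j u := by
  funext x
  rw [lap, Finset.sum_apply]
  refine Finset.sum_congr rfl fun j _ => ?_
  have hsupp : ∀ a ∉ ({0, 1, -1} : Finset ℤ), secondDiff a * u (x - Pi.single j a) = 0 := by
    intro a ha
    simp only [Finset.mem_insert, Finset.mem_singleton, not_or] at ha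
    simp [secondDiff, ha]
  have h0 : secondDiff 0 = -2 := if_pos rfl
  have h1 : secondDiff 1 = 1 := by simp [secondDiff]
  have hneg : secondDiff (-1) = 1 := by simp [secondDiff]
  rw [axisConv, tsum_eq_sum hsupp, Finset.sum_insert (by decide), Finset.sum_pair (by decide),
    h0, h1, hneg, Pi.single_zero, Pi.single_neg, sub_neg_eq_add, sub_zero]
  ring

lemma exists_continuousLinearMap_pd (hk : k ≤ 1) (j : Fin d) :
    ∃ L : Lp ℂ 2 (japMeasure d k) →L[ℂ] Lp ℂ 2 (japMeasure d k), ∀ u, ⇑(L u) = pd j u := by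
  obtain ⟨L, hL⟩ := exists_continuousLinearMap_axisConv (d := d) hk (nnnorm_phi_single_le j) j
  exact ⟨L, fun u => (hL u).trans (pd_eq_axisConv j u).symm⟩

lemma exists_continuousLinearMap_lap (hk : k ≤ 1) :
    ∃ L : Lp ℂ 2 (japMeasure d k) →L[ℂ] Lp ℂ 2 (japMeasure d k), ∀ u, ⇑(L u) = lap u := by
  choose L hL using exists_continuousLinearMap_axisConv (d := d) hk nnnorm_secondDiff_le
  refine ⟨∑ j, L j, fun u => ?_⟩
  rw [lap_eq_sum_axisConv, sum_apply,
    eq_of_ae_eq_japMeasure (Lp.coeFn_finsetSum Finset.univ fun j => L j u)]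
  simp only [hL]

end DiscreteDerivatives

section LipschitzODE

open scoped BoundedContinuousFunction

variable {E : Type*} [NormedAddCommGroup E] [NormedSpace ℝ E]

lemma norm_integral_le_of_norm_le_cosh {G : ℝ → E} {c l : ℝ} (hl : 0 < l)
    (hG : ∀ s, ‖G s‖ ≤ c * Real.cosh (l * s)) (t : ℝ) :
    ‖∫ s in (0 : ℝ)..t, G s‖ ≤ c / l * Real.cosh (l * t) := by
  have hc : 0 ≤ c := by simpa using (norm_nonneg _).trans (hG 0)
  have hderiv (s : ℝ) :
      HasDerivAt (fun s => c / l * Real.sinh (l * s)) (c * Real.cosh (l * s)) s :=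
    ((hasDerivAt_id' s).const_mul l).sinh.const_mul (c / l) |>.congr_deriv (by field_simp)
  have hcont : Continuous fun s => c * Real.cosh (l * s) := by fun_prop
  have hint : ∫ s in (0 : ℝ)..t, c * Real.cosh (l * s) = c / l * Real.sinh (l * t) := by
    simpa using intervalIntegral.integral_eq_sub_of_hasDerivAt (fun s _ => hderiv s)
      (hcont.intervalIntegrable 0 t)
  calc ‖∫ s in (0 : ℝ)..t, G s‖ ≤ |∫ s in (0 : ℝ)..t, c * Real.cosh (l * s)| :=
        intervalIntegral.norm_integral_le_abs_of_norm_le (.of_forall hG)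
          (hcont.intervalIntegrable 0 t)
    _ = c / l * Real.sinh |l * t| := by
        rw [hint, abs_mul, Real.abs_sinh, abs_of_nonneg (by positivity)]
    _ ≤ c / l * Real.cosh (l * t) := by
        rw [← Real.cosh_abs (l * t)]
        gcongr
        exact (Real.sinh_lt_cosh _).le

variable {V : E → E} {C : ℝ≥0}

lemma norm_map_cosh_smul_sub_le (hV : LipschitzWith C V) (l : ℝ) (β γ : ℝ →ᵇ E) (s : ℝ) :
    ‖V (Real.cosh (l * s) • β s) - V (Real.cosh (l * s) • γ s)‖
      ≤ C * ‖β - γ‖ * Real.cosh (l * s) := by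
  calc ‖V (Real.cosh (l * s) • β s) - V (Real.cosh (l * s) • γ s)‖
      ≤ C * (Real.cosh (l * s) * ‖(β - γ) s‖) := by
        refine (hV.norm_sub_le _ _).trans_eq ?_
        rw [← smul_sub, norm_smul, Real.norm_of_nonneg (Real.cosh_pos _).le,
          BoundedContinuousFunction.sub_apply]
    _ ≤ C * (Real.cosh (l * s) * ‖β - γ‖) := by
        gcongr
        exact (β - γ).norm_coe_le_norm s
    _ = C * ‖β - γ‖ * Real.cosh (l * s) := by ring

lemma norm_map_cosh_smul_le (hV : LipschitzWith C V) (l : ℝ) (β : ℝ →ᵇ E) (s : ℝ) :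
    ‖V (Real.cosh (l * s) • β s)‖ ≤ (‖V 0‖ + C * ‖β‖) * Real.cosh (l * s) := by
  have hsub := norm_map_cosh_smul_sub_le hV l β 0 s
  simp only [BoundedContinuousFunction.coe_zero, Pi.zero_apply, smul_zero, sub_zero] at hsub
  have h0 := le_mul_of_one_le_right (norm_nonneg (V 0)) (Real.one_le_cosh (l * s))
  calc ‖V (Real.cosh (l * s) • β s)‖
      ≤ ‖V 0‖ + ‖V (Real.cosh (l * s) • β s) - V 0‖ := norm_le_norm_add_norm_sub' _ _
    _ ≤ ‖V 0‖ * Real.cosh (l * s) + C * ‖β‖ * Real.cosh (l * s) := add_le_add h0 hsub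
    _ = (‖V 0‖ + C * ‖β‖) * Real.cosh (l * s) := by ring

lemma continuous_map_cosh_smul (hV : LipschitzWith C V) (l : ℝ) (β : ℝ →ᵇ E) :
    Continuous fun s => V (Real.cosh (l * s) • β s) :=
  hV.continuous.comp (by fun_prop)

/-- The Picard map of `α' = V α`, `α 0 = x₀`, expressed through `β t = α t / cosh (l t)`. The weight
keeps `β` bounded on all of `ℝ` and makes the map a contraction for large `l`. -/
def weightedPicard (hV : LipschitzWith C V) (x₀ : E) {l : ℝ} (hl : 0 < l) (β : ℝ →ᵇ E) :
    ℝ →ᵇ E :=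
  .ofNormedAddCommGroup
    (fun t => (Real.cosh (l * t))⁻¹ • (x₀ + ∫ s in (0 : ℝ)..t, V (Real.cosh (l * s) • β s)))
    (by
      have hprim := intervalIntegral.continuous_primitive (μ := volume)
        (fun a b => (continuous_map_cosh_smul hV l β).intervalIntegrable a b) 0
      exact (Continuous.inv₀ (by fun_prop) fun t => (Real.cosh_pos _).ne').smul
        (continuous_const.add hprim))
    (‖x₀‖ + (‖V 0‖ + C * ‖β‖) / l)
    (fun t => by
      rw [norm_smul, norm_inv, Real.norm_of_nonneg (Real.cosh_pos _).le,
        inv_mul_le_iff₀ (Real.cosh_pos _), mul_comm, add_mul]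
      exact norm_add_le_of_le (le_mul_of_one_le_right (norm_nonneg _) (Real.one_le_cosh _))
        (norm_integral_le_of_norm_le_cosh hl (norm_map_cosh_smul_le hV l β) t))

lemma lipschitzWith_weightedPicard (hV : LipschitzWith C V) (x₀ : E) {l : ℝ≥0} (hl : 0 < (l : ℝ)) :
    LipschitzWith (C / l) (weightedPicard hV x₀ hl) := by
  refine LipschitzWith.of_dist_le_mul fun β γ =>
    (BoundedContinuousFunction.dist_le (by positivity)).2 fun t => ?_
  have hint := norm_integral_le_of_norm_le_cosh hl (norm_map_cosh_smul_sub_le hV l β γ) t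
  rw [intervalIntegral.integral_sub ((continuous_map_cosh_smul hV l β).intervalIntegrable 0 t)
    ((continuous_map_cosh_smul hV l γ).intervalIntegrable 0 t)] at hint
  simp only [weightedPicard, BoundedContinuousFunction.coe_ofNormedAddCommGroup]
  rw [dist_smul₀, dist_add_left, dist_eq_norm, norm_inv, Real.norm_of_nonneg (Real.cosh_pos _).le,
    inv_mul_le_iff₀ (Real.cosh_pos _)]
  refine hint.trans_eq ?_
  push_cast
  rw [dist_eq_norm]
  ring

theorem exists_isIntegralCurve_of_lipschitzWith [CompleteSpace E] (hV : LipschitzWith C V)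
    (x₀ : E) : ∃ α : ℝ → E, α 0 = x₀ ∧ IsIntegralCurve α fun _ => V := by
  have hl : 0 < ((C + 1 : ℝ≥0) : ℝ) := by positivity
  have hcontr : ContractingWith (C / (C + 1)) (weightedPicard hV x₀ hl) :=
    ⟨(div_lt_one (by positivity)).2 (lt_add_one C), lipschitzWith_weightedPicard hV x₀ hl⟩
  set β := ContractingWith.fixedPoint (weightedPicard hV x₀ hl) hcontr
  let α (t : ℝ) : E := Real.cosh ((C + 1 : ℝ≥0) * t) • β t
  have hα : α = fun t => x₀ + ∫ s in (0 : ℝ)..t, V (α s) := by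
    funext t
    exact (inv_smul_eq_iff₀ (Real.cosh_pos _).ne').1
      (DFunLike.congr_fun hcontr.fixedPoint_isFixedPt.eq t) |>.symm
  refine ⟨α, by rw [hα]; simp, fun t => ?_⟩
  have hderiv := ((continuous_map_cosh_smul hV (C + 1 : ℝ≥0) β).integral_hasStrictDerivAt 0 t)
    |>.hasDerivAt.const_add x₀
  rwa [← hα] at hderiv

end LipschitzODE

section RightHandSide

variable {d k : ℕ}

lemma exists_continuousLinearMap_state (hk : k ≤ 1) :
    ∃ L : Lp ℂ 2 (japMeasure d k) × Lp ℂ 2 (japMeasure d k) →L[ℂ]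
        Lp (ℂ × (Fin (d + 1) → ℂ)) 2 (japMeasure d k),
      ∀ u v x, L (u, v) x = (u x, Fin.cons (v x) fun i => pd i u x) := by
  choose D hD using exists_continuousLinearMap_pd (d := d) hk
  let fst := ContinuousLinearMap.fst ℂ (Lp ℂ 2 (japMeasure d k)) (Lp ℂ 2 (japMeasure d k))
  let snd := ContinuousLinearMap.snd ℂ (Lp ℂ 2 (japMeasure d k)) (Lp ℂ 2 (japMeasure d k))
  let slot (i : Fin (d + 1)) : ℂ →L[ℂ] ℂ × (Fin (d + 1) → ℂ) :=
    (ContinuousLinearMap.inr ℂ ℂ _).comp (ContinuousLinearMap.single ℂ (fun _ => ℂ) i)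
  let A := (ContinuousLinearMap.inl ℂ ℂ (Fin (d + 1) → ℂ)).compLpL 2 (japMeasure d k)
  let B (i : Fin (d + 1)) := (slot i).compLpL 2 (japMeasure d k)
  have hA (w) : ⇑(A w) = fun x => (w x, 0) :=
    eq_of_ae_eq_japMeasure (ContinuousLinearMap.coeFn_compLpL _ w)
  have hB (i) (w) : ⇑(B i w) = fun x => (0, Pi.single i (w x)) :=
    eq_of_ae_eq_japMeasure (ContinuousLinearMap.coeFn_compLpL (slot i) w)
  refine ⟨A.comp fst + (B 0).comp snd + ∑ i, (B i.succ).comp ((D i).comp fst), fun u v x => ?_⟩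
  have hsum : (A u + B 0 v + ∑ i, B i.succ (D i u)) x
      = (u x, 0) + (0, Pi.single 0 (v x)) + ∑ i : Fin d, (0, Pi.single i.succ (pd i u x)) := by
    rw [eq_of_ae_eq_japMeasure (Lp.coeFn_add _ _), Pi.add_apply,
      eq_of_ae_eq_japMeasure (Lp.coeFn_add _ _), Pi.add_apply,
      eq_of_ae_eq_japMeasure (Lp.coeFn_finsetSum _ _), Finset.sum_apply]
    simp only [hA, hB, hD]
  have hcons : (Fin.cons (v x) fun i => pd i u x : Fin (d + 1) → ℂ)
      = Pi.single 0 (v x) + ∑ i : Fin d, Pi.single i.succ (pd i u x) := by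
    rw [← Finset.univ_sum_single (Fin.cons (v x) fun i => pd i u x : Fin (d + 1) → ℂ),
      Fin.sum_univ_succ]
    rfl
  simp only [add_apply, sum_apply, ContinuousLinearMap.comp_apply]
  refine hsum.trans (Prod.ext ?_ ?_)
  · simp [Prod.fst_sum]
  · simp [Prod.snd_sum, hcons]

lemma exists_lipschitzWith_acceleration (hk : k ≤ 1) {F : ℂ × (Fin (d + 1) → ℂ) → ℂ} {M : ℝ≥0}
    (hF : LipschitzWith M F) (hF0 : F (0, 0) = 0) :
    ∃ (C : ℝ≥0) (G : Lp ℂ 2 (japMeasure d k) × Lp ℂ 2 (japMeasure d k) →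
        Lp ℂ 2 (japMeasure d k)), LipschitzWith C G ∧
      ∀ u v x, G (u, v) x = lap u x + F (u x, Fin.cons (v x) fun i => pd i u x) := by
  obtain ⟨L, hL⟩ := exists_continuousLinearMap_lap (d := d) hk
  obtain ⟨P, hP⟩ := exists_continuousLinearMap_state (d := d) hk
  refine ⟨_, fun p => L p.1 + hF.compLp hF0 (P p),
    (L.lipschitz.comp LipschitzWith.prod_fst).add
      ((hF.lipschitzWith_compLp hF0).comp P.lipschitz), fun u v x => ?_⟩
  rw [eq_of_ae_eq_japMeasure (Lp.coeFn_add _ _), Pi.add_apply, hL,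
    eq_of_ae_eq_japMeasure (hF.coeFn_compLp hF0 _), Function.comp_apply, hP]

end RightHandSide

section Curves

variable {d k : ℕ} {S S' : Set ℝ}

lemma ContW.mono {f : ℝ → (Fin d → ℤ) → ℂ} (hf : ContW k S f) (hS : S' ⊆ S) : ContW k S' f :=
  fun t ht => (hf t (hS ht)).mono_left (nhdsWithin_mono t hS)

lemma DerivW.mono {f f' : ℝ → (Fin d → ℤ) → ℂ} (hf : DerivW k S f f') (hS : S' ⊆ S) :
    DerivW k S' f f' :=
  fun t ht => (hf t (hS ht)).mono_left (nhdsWithin_mono t (Set.sdiff_subset_sdiff_left hS))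

lemma IsC2.mono {u u1 u2 : ℝ → (Fin d → ℤ) → ℂ} (hu : IsC2 k S u u1 u2) (hS : S' ⊆ S) :
    IsC2 k S' u u1 u2 where
  mem0 t ht := hu.mem0 t (hS ht)
  mem1 t ht := hu.mem1 t (hS ht)
  mem2 t ht := hu.mem2 t (hS ht)
  cont0 := hu.cont0.mono hS
  cont1 := hu.cont1.mono hS
  cont2 := hu.cont2.mono hS
  hder1 := hu.hder1.mono hS
  hder2 := hu.hder2.mono hS

lemma SLSol.mono {F : ℂ × (Fin (d + 1) → ℂ) → ℂ} {f g : (Fin d → ℤ) → ℂ}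
    {u u1 u2 : ℝ → (Fin d → ℤ) → ℂ} (hu : SLSol d k F f g S u u1 u2) (hS : S' ⊆ S) :
    SLSol d k F f g S' u u1 u2 :=
  ⟨hu.1.mono hS, fun t ht => hu.2.1 t (hS ht), hu.2.2⟩

lemma contW_coeFn {h : ℝ → Lp ℂ 2 (japMeasure d k)} (hh : ContinuousOn h S) :
    ContW k S fun t => ⇑(h t) := by
  intro t ht
  have hlim : Tendsto (fun s => ‖h s - h t‖ₑ) (nhdsWithin t S) (nhds 0) := by
    simpa using ((hh t ht).tendsto.sub_const (h t)).enorm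
  refine hlim.congr fun s => ?_
  rw [← w2_coeFn, eq_of_ae_eq_japMeasure (Lp.coeFn_sub _ _)]
  rfl

lemma derivW_coeFn {h h' : ℝ → Lp ℂ 2 (japMeasure d k)}
    (hh : ∀ t ∈ S, HasDerivWithinAt h (h' t) S t) :
    DerivW k S (fun t => ⇑(h t)) fun t => ⇑(h' t) := by
  intro t ht
  have hlim : Tendsto (fun s => ‖slope h t s - h' t‖ₑ) (nhdsWithin t (S \ {t})) (nhds 0) := by
    simpa using ((hasDerivWithinAt_iff_tendsto_slope.1 (hh t ht)).sub_const (h' t)).enorm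
  refine hlim.congr fun s => ?_
  rw [← w2_coeFn, slope_def_module, eq_of_ae_eq_japMeasure (Lp.coeFn_sub _ _),
    eq_of_ae_eq_japMeasure (Lp.coeFn_smul _ _), eq_of_ae_eq_japMeasure (Lp.coeFn_sub _ _)]
  rfl

lemma isC2_coeFn {h h1 h2 : ℝ → Lp ℂ 2 (japMeasure d k)}
    (hh : ∀ t ∈ S, HasDerivWithinAt h (h1 t) S t) (hh1 : ∀ t ∈ S, HasDerivWithinAt h1 (h2 t) S t)
    (hh2 : ContinuousOn h2 S) :
    IsC2 k S (fun t => ⇑(h t)) (fun t => ⇑(h1 t)) fun t => ⇑(h2 t) where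
  mem0 t _ := (w2_coeFn (h t)).trans_lt enorm_lt_top
  mem1 t _ := (w2_coeFn (h1 t)).trans_lt enorm_lt_top
  mem2 t _ := (w2_coeFn (h2 t)).trans_lt enorm_lt_top
  cont0 := contW_coeFn fun t ht => (hh t ht).continuousWithinAt
  cont1 := contW_coeFn fun t ht => (hh1 t ht).continuousWithinAt
  cont2 := contW_coeFn hh2
  hder1 := derivW_coeFn hh
  hder2 := derivW_coeFn hh1

end Curves

theorem stmt17_general {d k : ℕ} (hk : k ≤ 1) {F : ℂ × (Fin (d + 1) → ℂ) → ℂ} {M : ℝ≥0}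
    (hF : LipschitzWith M F) (hF0 : F (0, 0) = 0) {f g : (Fin d → ℤ) → ℂ}
    (hf : w2 k f < ⊤) (hg : w2 k g < ⊤) :
    ∃ u u1 u2, SLSol d k F f g Set.univ u u1 u2 := by
  obtain ⟨f, rfl⟩ := exists_coeFn_eq_of_w2_lt_top hf
  obtain ⟨g, rfl⟩ := exists_coeFn_eq_of_w2_lt_top hg
  obtain ⟨C, G, hG, hGeq⟩ := exists_lipschitzWith_acceleration hk hF hF0
  obtain ⟨α, hα0, hα⟩ :=
    exists_isIntegralCurve_of_lipschitzWith (LipschitzWith.prod_snd.prodMk hG) (f, g)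
  have hderiv (t : ℝ) : HasDerivWithinAt α ((α t).2, G (α t)) Set.univ t :=
    (hα t).hasDerivWithinAt
  have hcont : Continuous α := continuous_iff_continuousAt.2 fun t => (hα t).continuousAt
  have hC2 := isC2_coeFn (fun t _ => (hderiv t).fst) (fun t _ => (hderiv t).snd)
    (hG.continuous.comp hcont).continuousOn
  refine ⟨_, _, _, hC2, fun t _ x => ?_, fun x => by rw [hα0], fun x => by rw [hα0]⟩
  exact sub_eq_iff_eq_add'.2 (hGeq (α t).1 (α t).2 x)

/-- if `F` is `C¹` with `F(0,0) = 0` and bounded gradient, then the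
semilinear discrete wave equation `∂ₜ²u - Δu = F(u,u')` with data
`f, g ∈ ℓ^{2,k}`, `k ∈ {0,1}`, has a global solution: a classical solution exists
on `[0,T]` for every `T > 0`. -/
theorem stmt17 (d : ℕ) (hd : 0 < d) (k : ℕ) (hk : k = 0 ∨ k = 1)
    (F : ℂ × (Fin (d + 1) → ℂ) → ℂ) (hF : ContDiff ℝ 1 F) (hF0 : F (0, 0) = 0)
    (hF' : ∃ M : ℝ, ∀ z : ℂ × (Fin (d + 1) → ℂ), ‖fderiv ℝ F z‖ ≤ M)
    (f g : (Fin d → ℤ) → ℂ) (hf : w2 k f < ⊤) (hg : w2 k g < ⊤) :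
    ∀ T : ℝ, 0 < T →
      ∃ u u1 u2, SLSol d k F f g (Set.Icc 0 T) u u1 u2 := by
  intro T _
  obtain ⟨M, hM⟩ := hF'
  have hFLip : LipschitzWith M.toNNReal F :=
    lipschitzWith_of_nnnorm_fderiv_le (𝕜 := ℝ) (hF.differentiable one_ne_zero) fun z =>
      NNReal.le_toNNReal_of_coe_le (hM z)
  obtain ⟨u, u1, u2, hu⟩ := stmt17_general (by lia) hFLip hF0 hf hg
  exact ⟨u, u1, u2, hu.mono (Set.subset_univ _)⟩
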